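/- Let L ≥ 1, let η ∈ S_L, and let x be an index such that η_j = 0 and u_j(η) = 0 for all j ≥ x (such x exists). Then (T_L(η))_j = 0 for all j ≥ x, the backward carrier ū of T_L(η) computed from this x satisfies ū_j = u_j(η) for all j ≤ x, and R_L(T_L(η)) = η; that is, the backward recursion recovers the previous state, so the time evolution T_L has a unique reverse evolution on states with finitely many nonzero entries. -/

import Mathlib

namespace BBS

attribute [local instance] Classical.propDecidable

noncomputable section

/-- Carrier sequence with initial load `m` for box capacity `L`. -/
def carrierM (L m : ℤ) (η : ℕ → ℤ) : ℕ → ℤ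
  | 0 => m
  | j + 1 => η j + max 0 (η j + carrierM L m η j - L)

/-- Carrier sequence (initial load `0`). -/
def carrier (L : ℤ) (η : ℕ → ℤ) : ℕ → ℤ := carrierM L 0 η

/-- Time evolution `T_L`. -/
def evol (L : ℤ) (η : ℕ → ℤ) (j : ℕ) : ℤ := min (L - η j) (carrier L η j)

/-- Time evolution `T_1^m` on binary sequences. -/
def evolOne (m : ℤ) (w : ℕ → ℤ) (j : ℕ) : ℤ := min (1 - w j) (carrierM 1 m w j)

/-- Membership in `S_{L,M}`. -/
def mem_S (L M : ℤ) (η : ℕ → ℤ) : Prop :=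
  (∃ N : ℕ, ∀ j, N ≤ j → η j = 0) ∧
  (∀ j, -M ≤ η j ∧ η j ≤ L + M) ∧
  η 0 ≤ 0 ∧
  (∀ j, max (-η j) (η j - L) ≤ M) ∧
  (∃ j, max (-η j) (η j - L) = M) ∧
  (∀ i : ℕ, ∑ j ∈ Finset.range (i + 2), η j ≤ ∑ j ∈ Finset.range (i + 1), (L - η j))

/-- Auxiliary sequence for the backward carrier. -/
def backAux (L : ℤ) (η : ℕ → ℤ) (x : ℕ) : ℕ → ℤ
  | 0 => 0
  | n + 1 => η (x - n - 1) + max 0 (η (x - n - 1) + backAux L η x n - L)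

/-- Backward carrier `ū` computed from the index `x`. -/
def backCarrier (L : ℤ) (η : ℕ → ℤ) (x j : ℕ) : ℤ :=
  if x ≤ j then 0 else backAux L η x (x - j)

/-- Reverse time evolution `R_L` computed from the index `x`. -/
def revol (L : ℤ) (η : ℕ → ℤ) (x j : ℕ) : ℤ :=
  if j < x then min (L - η j) (backCarrier L η x (j + 1)) else 0

/-- The concatenated word sequence `r_K(η)`. -/
def rSeq (L M : ℕ) (K : Set ℕ) (η : ℕ → ℤ) (n : ℕ) : ℤ :=
  if (n / (L + 2 * M) ∈ K ∧ ((n % (L + 2 * M) : ℕ) : ℤ) < η (n / (L + 2 * M)) + M) ∨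
      (n / (L + 2 * M) ∉ K ∧
        (L : ℤ) + 2 * M - (η (n / (L + 2 * M)) + M) ≤ ((n % (L + 2 * M) : ℕ) : ℤ))
  then 1 else 0

/-- The concatenated word sequence `l_K(η)`. -/
def lSeq (L M : ℕ) (K : Set ℕ) (η : ℕ → ℤ) (n : ℕ) : ℤ :=
  if (n / (L + 2 * M) ∈ K ∧
        (L : ℤ) + 2 * M - (η (n / (L + 2 * M)) + M) ≤ ((n % (L + 2 * M) : ℕ) : ℤ)) ∨
      (n / (L + 2 * M) ∉ K ∧ ((n % (L + 2 * M) : ℕ) : ℤ) < η (n / (L + 2 * M)) + M)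
  then 1 else 0

/-- Soliton flag sequence `a(η)`. -/
def flag (L : ℤ) (η : ℕ → ℤ) : ℕ → ℤ
  | 0 => 0
  | j + 1 =>
    if η j + η (j + 1) < L then 0
    else if η j + η (j + 1) = L then flag L η j else 1

/-- Primed soliton flag sequence `a′(η)` (with the convention `a′_{-1} = 0`). -/
def flag' (L : ℤ) (η : ℕ → ℤ) : ℕ → ℤ
  | 0 => if η 0 + η 1 < L then 0 else if η 0 + η 1 = L then 0 else 1
  | j + 1 =>
    if η (j + 1) + η (j + 2) < L then 0
    else if η (j + 1) + η (j + 2) = L then flag' L η j else 1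

/-- `I(η)`: right ends of contiguous 1-segments. -/
def Iset (L : ℤ) (η : ℕ → ℤ) : Set ℕ := {j | flag L η j = 1 ∧ flag L η (j + 1) = 0}

/-- `I′(η)`: left ends of contiguous right-1-segments. -/
def Iset' (L : ℤ) (η : ℕ → ℤ) : Set ℕ :=
  {j | (∀ k, j = k + 1 → flag' L η k = 0) ∧ flag' L η j = 1}

def marked (L : ℤ) (η : ℕ → ℤ) (j : ℕ) : Prop := j ∈ Iset L η ∨ j + 1 ∈ Iset L η

def marked' (L : ℤ) (η : ℕ → ℤ) (j : ℕ) : Prop :=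
  j ∈ Iset' L η ∨ ∃ k, j = k + 1 ∧ k ∈ Iset' L η

/-- Arc-count sequence `b̃(η)`. -/
def btilde (L M : ℕ) (η : ℕ → ℤ) (j : ℕ) : ℤ :=
  if marked (L : ℤ) η j then 0
  else min (η j + M) ((L : ℤ) + 2 * M - (η (j + 1) + M))

/-- `b̃_{j-1}` with the convention `b̃_{-1} = 0`. -/
def bprev (L M : ℕ) (η : ℕ → ℤ) : ℕ → ℤ
  | 0 => 0
  | j + 1 => btilde L M η j

/-- Primed arc-count sequence `b̃′(η)`. -/
def btilde' (L M : ℕ) (η : ℕ → ℤ) : ℕ → ℤ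
  | 0 => if marked' (L : ℤ) η 0 then 0 else η 0 + M
  | j + 1 =>
    if marked' (L : ℤ) η (j + 1) then 0
    else min (η (j + 1) + M) ((L : ℤ) + 2 * M - (η j + M))

/-- Background sequence `c(η)`: subsequence of `b̃` on unmarked indices, lowered by `M`. -/
def bg (L M : ℕ) (η : ℕ → ℤ) (j : ℕ) : ℤ :=
  btilde L M η (Nat.nth (fun i => ¬ marked (L : ℤ) η i) j) - M

/-- Primed background sequence `c′(η)`. -/
def bg' (L M : ℕ) (η : ℕ → ℤ) (j : ℕ) : ℤ :=
  btilde' L M η (Nat.nth (fun i => ¬ marked' (L : ℤ) η i) j) - M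

/-- Length of the word corresponding to box `j` in `d̃(η)`. -/
def wordLen (L M : ℕ) (η : ℕ → ℤ) (j : ℕ) : ℕ :=
  if j ∈ Iset (L : ℤ) η then L + 2 * M
  else ((L : ℤ) + 2 * M - bprev L M η j - btilde L M η j).toNat

def wordStart (L M : ℕ) (η : ℕ → ℤ) (j : ℕ) : ℕ :=
  ∑ k ∈ Finset.range j, wordLen L M η k

/-- Raised soliton word sequence `d̃(η)`. -/
def dTilde (L M : ℕ) (η : ℕ → ℤ) (n : ℕ) : ℤ :=
  if ∃ j, wordStart L M η j ≤ n ∧ n < wordStart L M η (j + 1) ∧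
      ((j ∈ Iset (L : ℤ) η ∧ ((n - wordStart L M η j : ℕ) : ℤ) < η j + M) ∨
        (j ∉ Iset (L : ℤ) η ∧
          (L : ℤ) + 2 * M - (η j + M) - bprev L M η j ≤ ((n - wordStart L M η j : ℕ) : ℤ)))
  then 1 else 0

/-- Length of the word corresponding to box `j` in `d̃′(η)`. -/
def wordLen' (L M : ℕ) (η : ℕ → ℤ) (j : ℕ) : ℕ :=
  if j ∈ Iset' (L : ℤ) η then L + 2 * M
  else ((L : ℤ) + 2 * M - btilde' L M η j - btilde' L M η (j + 1)).toNat

def wordStart' (L M : ℕ) (η : ℕ → ℤ) (j : ℕ) : ℕ :=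
  ∑ k ∈ Finset.range j, wordLen' L M η k

/-- Primed raised soliton word sequence `d̃′(η)`. -/
def dTilde' (L M : ℕ) (η : ℕ → ℤ) (n : ℕ) : ℤ :=
  if ∃ j, wordStart' L M η j ≤ n ∧ n < wordStart' L M η (j + 1) ∧
      ((j ∈ Iset' (L : ℤ) η ∧
          (L : ℤ) + 2 * M - (η j + M) ≤ ((n - wordStart' L M η j : ℕ) : ℤ)) ∨
        (j ∉ Iset' (L : ℤ) η ∧
          ((n - wordStart' L M η j : ℕ) : ℤ) < η j + M - btilde' L M η j))
  then 1 else 0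

/-- The sequence `0^{s 1}1^{t 1}0^{s 2}1^{t 2}⋯0^{s N}1^{t N}0^∞`. -/
def runSeq (N : ℕ) (s t : ℕ → ℕ) (n : ℕ) : ℤ :=
  if ∃ m, 1 ≤ m ∧ m ≤ N ∧
      (∑ k ∈ Finset.Icc 1 (m - 1), (s k + t k)) + s m ≤ n ∧
      n < ∑ k ∈ Finset.Icc 1 m, (s k + t k)
  then 1 else 0

/-- `w = 0^{s 1}1^{t 1}⋯1^{t N}0^∞` is the (maximal) run decomposition of `w`. -/
def IsRunDecomp (N : ℕ) (s t : ℕ → ℕ) (w : ℕ → ℤ) : Prop :=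
  (∀ m, 1 ≤ m → m ≤ N → 1 ≤ t m) ∧ (∀ m, 2 ≤ m → m ≤ N → 1 ≤ s m) ∧ w = runSeq N s t

def shrinkS (M : ℕ) (s : ℕ → ℕ) (m : ℕ) : ℕ := if m = 1 then s 1 - M else s m - 2 * M

def shrinkT (M : ℕ) (t : ℕ → ℕ) (m : ℕ) : ℕ := t m - 2 * M

/-- `d` is the soliton sequence `d(η)`. -/
def IsSolitonSeq (L M : ℕ) (η : ℕ → ℤ) (d : ℕ → ℤ) : Prop :=
  ∃ N s t, IsRunDecomp N s t (dTilde L M η) ∧ d = runSeq N (shrinkS M s) (shrinkT M t)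

/-- `d` is the primed soliton sequence `d′(η)`. -/
def IsSolitonSeq' (L M : ℕ) (η : ℕ → ℤ) (d : ℕ → ℤ) : Prop :=
  ∃ N s t, IsRunDecomp N s t (dTilde' L M η) ∧ d = runSeq N (shrinkS M s) (shrinkT M t)

/-- Forward shift `Λ`. -/
def lam (c : ℕ → ℤ) : ℕ → ℤ
  | 0 => 0
  | j + 1 => c j

/-- Membership in the background space `S^{(b)}_{L,M}`. -/
def mem_Sb (L M : ℤ) (c : ℕ → ℤ) : Prop := mem_S L M c ∧ ∀ j, c j + c (j + 1) ≤ L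

/-- Membership in the soliton space `S^{(f)}_L`: a binary sequence with finitely many
ones all of whose maximal runs of equal letters have length greater than `L`. -/
def mem_Sf (L : ℕ) (w : ℕ → ℤ) : Prop :=
  (∀ n, w n = 0 ∨ w n = 1) ∧ (∃ N : ℕ, ∀ n, N ≤ n → w n = 0) ∧
  ∀ n m : ℕ, n ≤ m → (∀ j, n ≤ j → j ≤ m → w j = w n) →
    (n = 0 ∨ w (n - 1) ≠ w n) → w (m + 1) ≠ w m → L < m + 1 - n

/-- Stages of the iterative arc-pairing construction: at each stage, connect every pair
`i < j` of yet-unpaired positions with `w i = a`, `w j = b` such that every position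
strictly between them is already paired. -/
def arcStage (a b : ℤ) (w : ℕ → ℤ) : ℕ → Set (ℕ × ℕ)
  | 0 => ∅
  | k + 1 => arcStage a b w k ∪
      {p : ℕ × ℕ | p.1 < p.2 ∧ w p.1 = a ∧ w p.2 = b ∧
        (∀ q ∈ arcStage a b w k, p.1 ≠ q.1 ∧ p.1 ≠ q.2 ∧ p.2 ≠ q.1 ∧ p.2 ≠ q.2) ∧
        (∀ m, p.1 < m → m < p.2 → ∃ q ∈ arcStage a b w k, m = q.1 ∨ m = q.2)}

/-- The arc pairing: `arcPairing 1 0 w` is the 10-arc pairing of `w`, and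
`arcPairing 0 1 w` is the 01-arc pairing of `w`. -/
def arcPairing (a b : ℤ) (w : ℕ → ℤ) : Set (ℕ × ℕ) := ⋃ k, arcStage a b w k

/-- Extension of `η` to integer indices with `η_j = L` for `j < 0`. -/
def etaExt (L : ℕ) (η : ℕ → ℤ) (j : ℤ) : ℤ := if j < 0 then (L : ℤ) else η j.toNat

end

end BBS

open BBS

/-!
When the carrier passes a box, the pair (box content, carrier load) is transformed by a local rule
that is an *involution*. Running the carrier backwards over the evolved state therefore undoes the
forward sweep box by box, as soon as both sweeps agree on the load at one index; at `x` both loads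
are zero. Such an `x` exists because over empty boxes the carrier loses `L` balls at each step until
it is empty.
-/

namespace BBS

section Exchange

variable {G : Type*} [AddCommGroup G] [LinearOrder G]

/-- The local rule of the box-ball system (the combinatorial `R`): a box of capacity `L` with
content `p.1` meets a carrier with load `p.2`; the components of the result are the new content
and the new load. -/
def exchange (L : G) (p : G × G) : G × G :=
  (min (L - p.1) p.2, p.1 + max 0 (p.1 + p.2 - L))

variable [IsOrderedAddMonoid G] {L a u : G}

theorem exchange_of_add_le (h : a + u ≤ L) : exchange L (a, u) = (u, a) := by
  have hu : u ≤ L - a := le_sub_iff_add_le'.mpr h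
  simp only [exchange, min_eq_right hu, max_eq_left (sub_nonpos.mpr h), add_zero]

theorem exchange_of_le_add (h : L ≤ a + u) : exchange L (a, u) = (L - a, a + (a + u - L)) := by
  have hu : L - a ≤ u := sub_le_iff_le_add'.mpr h
  simp only [exchange, min_eq_left hu, max_eq_right (sub_nonneg.mpr h)]

theorem exchange_involutive (L : G) : Function.Involutive (exchange L) := by
  rintro ⟨a, u⟩
  rcases le_total (a + u) L with h | h
  · rw [exchange_of_add_le h, exchange_of_add_le (add_comm a u ▸ h)]
  · have sum_eq : L - a + (a + (a + u - L)) = a + u := by abel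
    rw [exchange_of_le_add h, exchange_of_le_add (sum_eq.symm ▸ h), sum_eq, sub_sub_cancel]
    congr 1
    abel

end Exchange

variable {L : ℤ} {η : ℕ → ℤ} {x j : ℕ}

theorem exchange_carrier (L : ℤ) (η : ℕ → ℤ) (j : ℕ) :
    exchange L (η j, carrier L η j) = (evol L η j, carrier L η (j + 1)) :=
  rfl

theorem exchange_evol_carrier_succ (L : ℤ) (η : ℕ → ℤ) (j : ℕ) :
    exchange L (evol L η j, carrier L η (j + 1)) = (η j, carrier L η j) := by
  rw [← exchange_carrier, exchange_involutive]

theorem evol_eq_zero (hL : 0 ≤ L) (hη : η j = 0) (hu : carrier L η j = 0) : evol L η j = 0 := by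
  rw [evol, hη, hu, sub_zero, min_eq_right hL]

theorem backCarrier_of_le (h : x ≤ j) : backCarrier L η x j = 0 :=
  if_pos h

theorem backCarrier_sub (L : ℤ) (η : ℕ → ℤ) {x n : ℕ} (hn : n ≤ x) :
    backCarrier L η x (x - n) = backAux L η x n := by
  cases n with
  | zero => exact backCarrier_of_le le_rfl
  | succ n => rw [backCarrier, if_neg (by omega), Nat.sub_sub_self hn]

theorem exchange_backCarrier_succ (hj : j < x) :
    exchange L (η j, backCarrier L η x (j + 1)) = (revol L η x j, backCarrier L η x j) := by
  obtain ⟨n, rfl⟩ := Nat.exists_eq_add_of_lt hj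
  have load_succ := backCarrier_sub L η (show n ≤ j + n + 1 by omega)
  have load := backCarrier_sub L η (show n + 1 ≤ j + n + 1 by omega)
  rw [show j + n + 1 - n = j + 1 by omega] at load_succ
  rw [show j + n + 1 - (n + 1) = j by omega, backAux, ← load_succ,
    show j + n + 1 - n - 1 = j by omega] at load
  rw [load, revol, if_pos hj, exchange]

theorem backCarrier_evol (hx : carrier L η x = 0) (hj : j ≤ x) :
    backCarrier L (evol L η) x j = carrier L η j := by
  induction hj using Nat.decreasingInduction with
  | self => rw [backCarrier_of_le le_rfl, hx]
  | of_succ j hj ih =>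
    have step := exchange_backCarrier_succ (L := L) (η := evol L η) hj
    rw [ih, exchange_evol_carrier_succ] at step
    exact (congrArg Prod.snd step).symm

theorem revol_evol (hη : ∀ j, x ≤ j → η j = 0) (hx : carrier L η x = 0) :
    revol L (evol L η) x = η := by
  funext j
  rcases lt_or_ge j x with hj | hj
  · have step := exchange_backCarrier_succ (L := L) (η := evol L η) hj
    rw [backCarrier_evol hx hj, exchange_evol_carrier_succ] at step
    exact (congrArg Prod.fst step).symm
  · rw [revol, if_neg hj.not_gt, hη j hj]

theorem carrierM_succ_of_eq_zero {m : ℤ} (hη : η j = 0) :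
    carrierM L m η (j + 1) = max 0 (carrierM L m η j - L) := by
  rw [carrierM, hη, zero_add, zero_add]

theorem carrierM_add_succ_of_forall_eq_zero {m : ℤ} {N : ℕ} (hL : 0 ≤ L)
    (hη : ∀ j, N ≤ j → η j = 0) (n : ℕ) :
    carrierM L m η (N + n + 1) = max 0 (carrierM L m η N - (n + 1) * L) := by
  induction n with
  | zero => simpa using carrierM_succ_of_eq_zero (hη N le_rfl)
  | succ n ih =>
    calc carrierM L m η (N + (n + 1) + 1)
        = max 0 (carrierM L m η (N + n + 1) - L) :=
          carrierM_succ_of_eq_zero (hη _ (by omega))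
      _ = max 0 (carrierM L m η N - (n + 1) * L - L) := by rw [ih]; omega
      _ = max 0 (carrierM L m η N - ((n + 1 : ℕ) + 1) * L) := by push_cast; ring_nf

theorem exists_forall_eq_zero_and_carrier_eq_zero (hL : 0 < L)
    (hη : ∃ N, ∀ j, N ≤ j → η j = 0) :
    ∃ y, ∀ j, y ≤ j → η j = 0 ∧ carrier L η j = 0 := by
  obtain ⟨N, hN⟩ := hη
  refine ⟨N + (carrier L η N).toNat + 1, fun j hj => ⟨hN j (by omega), ?_⟩⟩
  obtain ⟨n, rfl⟩ : ∃ n, j = N + n + 1 := ⟨j - N - 1, by omega⟩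
  have load_le : carrier L η N ≤ (n + 1) * L :=
    calc carrier L η N ≤ n + 1 := by omega
      _ ≤ (n + 1) * L := le_mul_of_one_le_right (by positivity) hL
  exact (carrierM_add_succ_of_forall_eq_zero hL.le hN n).trans
    (max_eq_left (sub_nonpos.mpr load_le))

end BBS

theorem stmt_1_general (L : ℤ) (hL : 0 < L) (η : ℕ → ℤ) (hη : ∃ N, ∀ j, N ≤ j → η j = 0) :
    (∃ y, ∀ j, y ≤ j → η j = 0 ∧ carrier L η j = 0) ∧
    ∀ x, (∀ j, x ≤ j → η j = 0 ∧ carrier L η j = 0) →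
      (∀ j, x ≤ j → evol L η j = 0) ∧
      (∀ j, j ≤ x → backCarrier L (evol L η) x j = carrier L η j) ∧
      revol L (evol L η) x = η := by
  refine ⟨exists_forall_eq_zero_and_carrier_eq_zero hL hη, fun x hx => ⟨?_, ?_, ?_⟩⟩
  · exact fun j hj => evol_eq_zero hL.le (hx j hj).1 (hx j hj).2
  · exact fun j hj => backCarrier_evol (hx x le_rfl).2 hj
  · exact revol_evol (fun j hj => (hx j hj).1) (hx x le_rfl).2

/-- the backward recursion recovers the previous state, so `T_L` has a
unique reverse evolution on states with finitely many nonzero entries. -/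
theorem stmt_1 (L : ℕ) (hL : 1 ≤ L) (η : ℕ → ℤ) (hη : mem_S L 0 η)
    (x : ℕ) (hx : ∀ j, x ≤ j → η j = 0 ∧ carrier L η j = 0) :
    (∃ y : ℕ, ∀ j, y ≤ j → η j = 0 ∧ carrier L η j = 0) ∧
    (∀ j, x ≤ j → evol L η j = 0) ∧
    (∀ j, j ≤ x → backCarrier L (evol L η) x j = carrier L η j) ∧
    revol L (evol L η) x = η := by
  obtain ⟨exists_empty, reverse⟩ := stmt_1_general L (mod_cast hL) η hη.1
  exact ⟨exists_empty, reverse x hx⟩
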